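/- Let k = (k_1,…,k_n) be integers with 1 ≤ k_1 < … < k_n, let s ≥ n·k_n + 1, and let F be a system of diagonal forms in s variables of degrees k_1,…,k_n with nonzero integer coefficients. Then the singular integral 𝕀(F) = ∫_{ℝ^n} (∫_{[−1,1]^s} e(β·F(t)) dt) dβ is absolutely convergent. Moreover, if the system F(x) = 0 has a nonsingular solution over ℝ, then 𝕀(F) > 0. -/

import Mathlib

/-!
The inner integral factorises as `∏ⱼ ∫_{-1}^{1} e(∑ᵢ βᵢ u_{i,j} t^{kᵢ}) dt`. Each factor is
`≪ (1 + ‖β‖)^{-1/K}` with `K` the largest degree (`one_var_bound`): for a suitable `i`, the `kᵢ`-th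
derivative of the phase is `≫ ‖β‖` on all of `[-1, 1]` (`phase_deriv_lower`), and van der Corput's
lemma (`van_der_corput`) applies. Since `s / K > n`, the product is integrable over `ℝ^n`.

For positivity, insert the factor `exp(-ε² |β|²)`. By dominated convergence the smoothed integral
tends to the singular integral as `ε → 0` (`tendsto_smoothInt`). By Fubini it equals the integral
over the cube of a Gaussian kernel `≍ ε^{-n} exp(-|π F(t)|² / ε²)` (`smoothInt_eq`). This is real and
bounded below by `ε^{-n}` times the volume of `{t : |F(t)| ≤ ε}`, up to a constant. A nonsingular
real zero, moved into the interior of the cube by homogeneity, forces that volume to be `≫ ε^n`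
(`volume_near_zero`), so the limit is a positive real number.
-/

open MeasureTheory Finset

noncomputable def e (θ : ℝ) : ℂ := Complex.exp (2 * Real.pi * Complex.I * θ)

/-- The diagonal form `F_i(t) = ∑_j u_{i,j} t_j^{k_i}` over a commutative ring. -/
noncomputable def dF {R : Type*} [CommRing R] {n s : ℕ} (k : Fin n → ℕ)
    (u : Fin n → Fin s → ℤ) (i : Fin n) (t : Fin s → R) : R :=
  ∑ j, (u i j : R) * t j ^ k i

noncomputable def NF {n s : ℕ} (k : Fin n → ℕ) (u : Fin n → Fin s → ℤ) (X : ℝ) : ℕ :=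
  Nat.card {x : Fin s → ℤ | (∀ j, |(x j : ℝ)| ≤ X) ∧ ∀ i, dF k u i x = 0}

noncomputable def singIntInner {n s : ℕ} (k : Fin n → ℕ) (u : Fin n → Fin s → ℤ)
    (β : Fin n → ℝ) : ℂ :=
  ∫ t in Set.Icc (fun _ : Fin s => (-1 : ℝ)) (fun _ => 1),
    e (∑ i, β i * dF k u i t)

noncomputable def singInt {n s : ℕ} (k : Fin n → ℕ) (u : Fin n → Fin s → ℤ) : ℂ :=
  ∫ β : Fin n → ℝ, singIntInner k u β

noncomputable def singSerTerm {n s : ℕ} (k : Fin n → ℕ) (u : Fin n → Fin s → ℤ)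
    (q : ℕ) : ℂ :=
  (1 / (q : ℂ) ^ s) *
    ∑ a ∈ (Fintype.piFinset fun _ : Fin n => Finset.Icc 1 q).filter
        (fun a => Nat.gcd (Finset.univ.gcd a) q = 1),
      ∑ r ∈ Fintype.piFinset fun _ : Fin s => Finset.Icc 1 q,
        e ((∑ i, (a i : ℝ) * ((dF k u i fun j => ((r j : ℤ))) : ℝ)) / q)

noncomputable def singSer {n s : ℕ} (k : Fin n → ℕ) (u : Fin n → Fin s → ℤ) : ℂ :=
  ∑' q : ℕ, singSerTerm k u (q + 1)

/-- A nonsingular solution of the system `F = 0` over a field `K`. -/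
def NonsingularSol {K : Type*} [Field K] {n s : ℕ} (k : Fin n → ℕ)
    (u : Fin n → Fin s → ℤ) (η : Fin s → K) : Prop :=
  (∀ i, dF k u i η = 0) ∧
    (Matrix.of fun i j => (k i : K) * (u i j : K) * η j ^ (k i - 1)).rank = n

/-! ### Oscillatory integrals with polynomial phase -/

theorem norm_e (θ : ℝ) : ‖e θ‖ = 1 := by
  have h : (2 * Real.pi * Complex.I * θ : ℂ) = ((2 * Real.pi * θ : ℝ) : ℂ) * Complex.I := by
    push_cast; ring
  rw [e, h, Complex.norm_exp_ofReal_mul_I]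

theorem continuous_e : Continuous e := by
  unfold e; fun_prop

theorem e_add (x y : ℝ) : e (x + y) = e x * e y := by
  rw [e, e, e, ← Complex.exp_add]; congr 1; push_cast; ring

theorem e_sum {ι : Type*} (A : Finset ι) (f : ι → ℝ) : e (∑ i ∈ A, f i) = ∏ i ∈ A, e (f i) := by
  classical
  induction A using Finset.induction_on with
  | empty => simp [e]
  | insert a A ha ih => rw [Finset.sum_insert ha, Finset.prod_insert ha, e_add, ih]

theorem e_neg (x : ℝ) : e (-x) = (starRingEnd ℂ) (e x) := by
  rw [e, e, ← Complex.exp_conj]; congr 1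
  simp only [map_mul, Complex.conj_I, Complex.conj_ofReal, Complex.conj_ofNat]; push_cast; ring

theorem norm_integral_e_neg (f : ℝ → ℝ) (a b : ℝ) :
    ‖∫ t in a..b, e (-f t)‖ = ‖∫ t in a..b, e (f t)‖ := by
  simp only [e_neg]
  rw [intervalIntegral.intervalIntegral_eq_integral_uIoc, integral_conj,
    intervalIntegral.intervalIntegral_eq_integral_uIoc, norm_smul, norm_smul, RCLike.norm_conj]

open Polynomial in
theorem hasDerivAt_e_poly (P : ℝ[X]) (t : ℝ) :
    HasDerivAt (fun t : ℝ => e (P.eval t))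
      (e (P.eval t) * (2 * Real.pi * Complex.I * (P.derivative.eval t : ℝ))) t := by
  have h1 := (P.hasDerivAt t).ofReal_comp
  have h2 := (h1.const_mul (2 * Real.pi * Complex.I : ℂ)).cexp
  exact h2

open Polynomial in
theorem continuous_e_poly (P : ℝ[X]) : Continuous (fun t : ℝ => e (P.eval t)) :=
  continuous_e.comp P.continuous

theorem norm_integral_e_le (f : ℝ → ℝ) {a b : ℝ} (hab : a ≤ b) :
    ‖∫ t in a..b, e (f t)‖ ≤ b - a := by
  have := intervalIntegral.norm_integral_le_of_norm_le_const (a := a) (b := b) (C := 1)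
    (f := fun t => e (f t)) (fun t _ => (norm_e _).le)
  rwa [one_mul, abs_of_nonneg (by linarith)] at this

open Polynomial in
/-- Integration by parts against the reciprocal of the derivative of the phase. -/
theorem ibp_bound (P : ℝ[X]) {a b μ : ℝ} (hab : a ≤ b) (hμ : 0 < μ)
    (h : ∀ t ∈ Set.Icc a b, μ ≤ P.derivative.eval t) :
    ‖∫ t in a..b, e (P.eval t)‖ ≤ (2 * Real.pi)⁻¹ * (2 / μ +
      ∫ t in a..b, |P.derivative.derivative.eval t| / (P.derivative.eval t) ^ 2) := by
  set D : ℝ → ℝ := fun t => P.derivative.eval t with hD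
  set D2 : ℝ → ℝ := fun t => P.derivative.derivative.eval t with hD2
  have hDc : Continuous D := P.derivative.continuous
  have hD2c : Continuous D2 := P.derivative.derivative.continuous
  have hpos : ∀ t ∈ Set.uIcc a b, 0 < D t := by
    intro t ht; rw [Set.uIcc_of_le hab] at ht; exact hμ.trans_le (h t ht)
  have hu : ∀ t ∈ Set.uIcc a b,
      HasDerivAt (fun t => (((D t)⁻¹ : ℝ) : ℂ)) ((-(D2 t) / (D t) ^ 2 : ℝ) : ℂ) t := by
    intro t ht
    exact ((P.derivative.hasDerivAt t).inv (hpos t ht).ne').ofReal_comp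
  have hu'c : ContinuousOn (fun t => -(D2 t) / (D t) ^ 2) (Set.uIcc a b) :=
    hD2c.neg.continuousOn.div (hDc.pow 2).continuousOn (fun t ht => (pow_pos (hpos t ht) 2).ne')
  have key := intervalIntegral.integral_mul_deriv_eq_deriv_mul
    (u := fun t => (((D t)⁻¹ : ℝ) : ℂ)) (v := fun t => e (P.eval t))
    (u' := fun t => ((-(D2 t) / (D t) ^ 2 : ℝ) : ℂ))
    (v' := fun t => e (P.eval t) * (2 * Real.pi * Complex.I * (P.derivative.eval t : ℝ)))
    hu (fun t _ => hasDerivAt_e_poly P t)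
    (Complex.continuous_ofReal.comp_continuousOn hu'c).intervalIntegrable
    (((continuous_e_poly P).mul (by fun_prop)).intervalIntegrable _ _)
  have hL : (∫ t in a..b, (((D t)⁻¹ : ℝ) : ℂ) *
      (e (P.eval t) * (2 * Real.pi * Complex.I * (P.derivative.eval t : ℝ))))
      = (2 * Real.pi * Complex.I) * ∫ t in a..b, e (P.eval t) := by
    rw [← intervalIntegral.integral_const_mul]
    refine intervalIntegral.integral_congr (fun t ht => ?_)
    have : (D t : ℂ) ≠ 0 := by exact_mod_cast (hpos t ht).ne'
    have h2 : (P.derivative.eval t : ℝ) = D t := rfl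
    simp only [h2]; push_cast; field_simp
  rw [hL] at key
  have hn : ‖(2 * Real.pi * Complex.I : ℂ) * ∫ t in a..b, e (P.eval t)‖
      = 2 * Real.pi * ‖∫ t in a..b, e (P.eval t)‖ := by
    simp [abs_of_pos Real.pi_pos]
  have hI : ‖∫ t in a..b, ((-(D2 t) / (D t) ^ 2 : ℝ) : ℂ) * e (P.eval t)‖ ≤
      ∫ t in a..b, |D2 t| / (D t) ^ 2 := by
    refine (intervalIntegral.norm_integral_le_integral_norm hab).trans (le_of_eq ?_)
    refine intervalIntegral.integral_congr (fun t _ => ?_)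
    simp [norm_e]
  have hb : ∀ t ∈ Set.Icc a b, ‖(((D t)⁻¹ : ℝ) : ℂ) * e (P.eval t)‖ ≤ μ⁻¹ := by
    intro t ht
    have h0 : 0 < D t := hμ.trans_le (h t ht)
    rw [norm_mul, norm_e, mul_one, Complex.norm_real, Real.norm_of_nonneg (by positivity)]
    exact inv_anti₀ hμ (h t ht)
  have h3 : 2 * Real.pi * ‖∫ t in a..b, e (P.eval t)‖ ≤
      2 / μ + ∫ t in a..b, |D2 t| / (D t) ^ 2 := by
    rw [← hn, key]
    refine (norm_sub_le _ _).trans (add_le_add ((norm_sub_le _ _).trans ?_) hI)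
    have := add_le_add (hb b (Set.right_mem_Icc.2 hab)) (hb a (Set.left_mem_Icc.2 hab))
    refine this.trans (le_of_eq ?_); ring
  rw [← div_eq_inv_mul, le_div_iff₀ (by positivity)]
  linarith

open Polynomial in
theorem first_deriv_bound_mono (P : ℝ[X]) {a b μ : ℝ} (hab : a ≤ b) (hμ : 0 < μ)
    (h : ∀ t ∈ Set.Icc a b, μ ≤ P.derivative.eval t)
    (h2 : (∀ t ∈ Set.Icc a b, 0 ≤ P.derivative.derivative.eval t) ∨
      (∀ t ∈ Set.Icc a b, P.derivative.derivative.eval t ≤ 0)) :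
    ‖∫ t in a..b, e (P.eval t)‖ ≤ 1 / μ := by
  have hpos : ∀ t ∈ Set.uIcc a b, 0 < P.derivative.eval t := by
    intro t ht; rw [Set.uIcc_of_le hab] at ht; exact hμ.trans_le (h t ht)
  have hc : ContinuousOn (fun t => -(P.derivative.derivative.eval t) / (P.derivative.eval t) ^ 2)
      (Set.uIcc a b) :=
    P.derivative.derivative.continuous.neg.continuousOn.div
      (P.derivative.continuous.pow 2).continuousOn (fun t ht => (pow_pos (hpos t ht) 2).ne')
  have hF := intervalIntegral.integral_eq_sub_of_hasDerivAt
    (f := fun t => (P.derivative.eval t)⁻¹)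
    (f' := fun t => -(P.derivative.derivative.eval t) / (P.derivative.eval t) ^ 2) (a := a) (b := b)
    (fun t ht => (P.derivative.hasDerivAt t).inv (hpos t ht).ne') hc.intervalIntegrable
  have ha := h a (Set.left_mem_Icc.2 hab)
  have hb := h b (Set.right_mem_Icc.2 hab)
  have ha' : (P.derivative.eval a)⁻¹ ≤ μ⁻¹ := inv_anti₀ hμ ha
  have hb' : (P.derivative.eval b)⁻¹ ≤ μ⁻¹ := inv_anti₀ hμ hb
  have ha0 : 0 < (P.derivative.eval a)⁻¹ := inv_pos.2 (hμ.trans_le ha)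
  have hb0 : 0 < (P.derivative.eval b)⁻¹ := inv_pos.2 (hμ.trans_le hb)
  have hvar : (∫ t in a..b, |P.derivative.derivative.eval t| / (P.derivative.eval t) ^ 2) ≤ μ⁻¹ := by
    rcases h2 with h2 | h2
    · have : (∫ t in a..b, |P.derivative.derivative.eval t| / (P.derivative.eval t) ^ 2) =
          -∫ t in a..b, -(P.derivative.derivative.eval t) / (P.derivative.eval t) ^ 2 := by
        rw [← intervalIntegral.integral_neg]
        refine intervalIntegral.integral_congr (fun t ht => ?_)
        rw [Set.uIcc_of_le hab] at ht
        simp only [abs_of_nonneg (h2 t ht)]; ring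
      rw [this, hF]; linarith
    · have : (∫ t in a..b, |P.derivative.derivative.eval t| / (P.derivative.eval t) ^ 2) =
          ∫ t in a..b, -(P.derivative.derivative.eval t) / (P.derivative.eval t) ^ 2 := by
        refine intervalIntegral.integral_congr (fun t ht => ?_)
        rw [Set.uIcc_of_le hab] at ht
        simp only [abs_of_nonpos (h2 t ht)]
      rw [this, hF]; linarith
  refine (ibp_bound P hab hμ h).trans ?_
  have hμ' : 0 < μ⁻¹ := inv_pos.2 hμ
  rw [← div_eq_inv_mul, div_le_iff₀ (by positivity), one_div, div_eq_mul_inv]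
  nlinarith [Real.pi_gt_three]

open Polynomial in
theorem first_deriv_bound_bdd (P : ℝ[X]) {a b μ M : ℝ} (hab : a ≤ b) (hμ : 0 < μ)
    (h : ∀ t ∈ Set.Icc a b, μ ≤ P.derivative.eval t)
    (h2 : ∀ t ∈ Set.Icc a b, |P.derivative.derivative.eval t| ≤ M) :
    ‖∫ t in a..b, e (P.eval t)‖ ≤ 2 / μ + M / μ ^ 2 * (b - a) := by
  have hM : 0 ≤ M := (abs_nonneg _).trans (h2 a (Set.left_mem_Icc.2 hab))
  have hvar : (∫ t in a..b, |P.derivative.derivative.eval t| / (P.derivative.eval t) ^ 2)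
      ≤ M / μ ^ 2 * (b - a) := by
    have := intervalIntegral.norm_integral_le_of_norm_le_const (a := a) (b := b) (C := M / μ ^ 2)
      (f := fun t => |P.derivative.derivative.eval t| / (P.derivative.eval t) ^ 2) (fun t ht => by
        rw [Set.uIoc_of_le hab] at ht
        have ht' := Set.Ioc_subset_Icc_self ht
        have h1 := h t ht'
        rw [Real.norm_of_nonneg (by positivity)]
        gcongr
        exact h2 t ht')
    rw [abs_of_nonneg (by linarith : 0 ≤ b - a)] at this
    exact (le_abs_self _).trans this
  refine (ibp_bound P hab hμ h).trans ?_
  have h0 : 0 ≤ M / μ ^ 2 * (b - a) := mul_nonneg (by positivity) (by linarith)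
  have h1 : 0 < 2 / μ := by positivity
  rw [← div_eq_inv_mul, div_le_iff₀ (by positivity)]
  nlinarith [Real.pi_gt_three]

open Polynomial in
/-- Van der Corput's lemma for polynomial phases, with derivative of order `j + 1`; for the first
derivative (`j = 0`) one also needs `P'` to be monotone. The induction removes an interval of length
`≪ δ / μ` around the zero of the previous derivative, outside which that derivative is at least `δ`
in absolute value. -/
theorem van_der_corput (j : ℕ) : ∃ C : ℝ, 0 < C ∧ ∀ (P : ℝ[X]) (a b μ : ℝ), a ≤ b → 0 < μ →
    (∀ t ∈ Set.Icc a b, μ ≤ (derivative^[j + 1] P).eval t) →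
    (j = 0 → (∀ t ∈ Set.Icc a b, 0 ≤ P.derivative.derivative.eval t) ∨
      (∀ t ∈ Set.Icc a b, P.derivative.derivative.eval t ≤ 0)) →
    ‖∫ t in a..b, e (P.eval t)‖ ≤ C * μ ^ (-(1 / ((j : ℝ) + 1))) := by
  induction j with
  | zero =>
    refine ⟨1, one_pos, fun P a b μ hab hμ h h2 => ?_⟩
    have := first_deriv_bound_mono P hab hμ h (h2 rfl)
    simpa [Real.rpow_neg_one] using this
  | succ j ih =>
    obtain ⟨C, hC, hV⟩ := ih
    refine ⟨2 + 2 * C, by positivity, fun P a b μ hab hμ h _ => ?_⟩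
    set f : ℝ → ℝ := fun t => (derivative^[j + 1] P).eval t with hf
    have hfc : Continuous f := (derivative^[j + 1] P).continuous
    have hfd : ∀ t, HasDerivAt f ((derivative^[j + 1 + 1] P).eval t) t := by
      intro t
      have := (derivative^[j + 1] P).hasDerivAt t
      rwa [← Function.iterate_succ_apply' derivative (j + 1) P] at this
    have hgrow : ∀ x ∈ Set.Icc a b, ∀ y ∈ Set.Icc a b, x ≤ y → μ * (y - x) ≤ f y - f x := by
      refine (convex_Icc a b).mul_sub_le_image_sub_of_le_deriv hfc.continuousOn
        (fun t _ => (hfd t).differentiableAt.differentiableWithinAt) (fun t ht => ?_)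
      rw [(hfd t).deriv]; exact h t (interior_subset ht)
    -- the sign of `P''` on subintervals, needed when `P'` is the function bounded below
    have hsgn : j = 0 → ∀ t ∈ Set.Icc a b, 0 ≤ P.derivative.derivative.eval t := by
      intro hj t ht
      have := h t ht
      subst hj
      exact hμ.le.trans this
    -- the cut-off for which `δ / μ` and `δ ^ (-1 / (j + 1))` coincide
    set δ : ℝ := μ ^ (((j : ℝ) + 1) / ((j : ℝ) + 1 + 1)) with hδ
    have hδ0 : 0 < δ := Real.rpow_pos_of_pos hμ _
    set B : ℝ := μ ^ (-(1 / (((j + 1 : ℕ) : ℝ) + 1))) with hB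
    have hB1 : δ / μ = B := by
      rw [hδ, hB, ← Real.rpow_sub_one hμ.ne']
      congr 1; push_cast; field_simp; ring
    have hB2 : δ ^ (-(1 / ((j : ℝ) + 1))) = B := by
      rw [hδ, hB, ← Real.rpow_mul hμ.le]
      congr 1; push_cast; field_simp
    have hB0 : 0 < B := Real.rpow_pos_of_pos hμ _
    obtain ⟨c, hc, hcb, hca⟩ : ∃ c ∈ Set.Icc a b, (c = b ∨ 0 ≤ f c) ∧ (c = a ∨ f c ≤ 0) := by
      by_cases h1 : 0 ≤ f a
      · exact ⟨a, Set.left_mem_Icc.2 hab, Or.inr h1, Or.inl rfl⟩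
      by_cases h2 : f b ≤ 0
      · exact ⟨b, Set.right_mem_Icc.2 hab, Or.inl rfl, Or.inr h2⟩
      push Not at h1 h2
      obtain ⟨c, hc, hc0⟩ := intermediate_value_Icc hab hfc.continuousOn
        (show (0 : ℝ) ∈ Set.Icc (f a) (f b) from ⟨h1.le, h2.le⟩)
      exact ⟨c, hc, Or.inr hc0.ge, Or.inr hc0.le⟩
    have hint : ∀ x y : ℝ, IntervalIntegrable (fun t => e (P.eval t)) volume x y :=
      fun x y => (continuous_e_poly P).intervalIntegrable _ _
    have hμB : μ * B = δ := by rw [← hB1]; field_simp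
    have hR : ‖∫ t in c..b, e (P.eval t)‖ ≤ B + C * B := by
      by_cases hx : b ≤ c + B
      · refine (norm_integral_e_le _ hc.2).trans ?_
        nlinarith [mul_pos hC hB0]
      push Not at hx
      have hcb' : 0 ≤ f c := hcb.resolve_left (by intro h; linarith)
      rw [← intervalIntegral.integral_add_adjacent_intervals (hint c (c + B)) (hint (c + B) b)]
      refine (norm_add_le _ _).trans (add_le_add ?_ ?_)
      · refine (norm_integral_e_le _ (by linarith)).trans (by linarith)
      · refine (hV P (c + B) b δ hx.le hδ0 (fun t ht => ?_)
          (fun hj => Or.inl (fun t ht => ?_))).trans_eq (by rw [hB2])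
        · have := hgrow c hc t ⟨by linarith [ht.1, hc.1], ht.2⟩ (by linarith [ht.1])
          have h3 : μ * B ≤ μ * (t - c) := by gcongr; linarith [ht.1]
          change δ ≤ f t
          linarith
        · exact hsgn hj t ⟨by linarith [ht.1, hc.1], ht.2⟩
    -- left of `c` the derivative is negative, so the induction hypothesis is applied to `-P`
    have hL : ‖∫ t in a..c, e (P.eval t)‖ ≤ B + C * B := by
      by_cases hx : c - B ≤ a
      · refine (norm_integral_e_le _ hc.1).trans ?_
        nlinarith [mul_pos hC hB0]
      push Not at hx
      have hca' : f c ≤ 0 := hca.resolve_left (by intro h; linarith)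
      rw [← intervalIntegral.integral_add_adjacent_intervals (hint a (c - B)) (hint (c - B) c),
        add_comm]
      refine (norm_add_le _ _).trans (add_le_add ?_ ?_)
      · refine (norm_integral_e_le _ (by linarith)).trans (by linarith)
      · have hconj : ‖∫ t in a..(c - B), e (P.eval t)‖ = ‖∫ t in a..(c - B), e ((-P).eval t)‖ := by
          simp only [eval_neg, norm_integral_e_neg]
        rw [hconj]
        refine (hV (-P) a (c - B) δ hx.le hδ0 (fun t ht => ?_)
          (fun hj => Or.inr (fun t ht => ?_))).trans_eq (by rw [hB2])
        · have := hgrow t ⟨ht.1, by linarith [ht.2, hc.2]⟩ c hc (by linarith [ht.2])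
          have h3 : μ * B ≤ μ * (c - t) := by gcongr; linarith [ht.2]
          rw [iterate_derivative_neg, eval_neg]
          change δ ≤ -f t
          linarith
        · have := hsgn hj t ⟨ht.1, by linarith [ht.2, hc.2]⟩
          simpa using this
    rw [← intervalIntegral.integral_add_adjacent_intervals (hint a c) (hint c b)]
    refine (norm_add_le _ _).trans ?_
    linarith

/-! ### Uniform decay of the one-variable integrals -/

open Polynomial in
/-- The polynomial `∑ αᵢ X^{kᵢ}`. -/
noncomputable def phase {n : ℕ} (k : Fin n → ℕ) (α : Fin n → ℝ) : ℝ[X] :=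
  ∑ i, C (α i) * X ^ k i

open Polynomial in
theorem phase_eval {n : ℕ} (k : Fin n → ℕ) (α : Fin n → ℝ) (t : ℝ) :
    (phase k α).eval t = ∑ i, α i * t ^ k i := by
  simp [phase, eval_finsetSum]

open Polynomial in
theorem phase_deriv_eval {n : ℕ} (k : Fin n → ℕ) (α : Fin n → ℝ) (m : ℕ) (t : ℝ) :
    (derivative^[m] (phase k α)).eval t =
      ∑ i, α i * ((k i).descFactorial m * t ^ (k i - m)) := by
  simp [phase, iterate_derivative_sum, iterate_derivative_C_mul,
    iterate_derivative_X_pow_eq_natCast_mul, eval_finsetSum]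

theorem descFactorial_term_le {κ m K : ℕ} (hκ : κ ≤ K) (hm : m ≤ K) (hK : 1 ≤ K) {t : ℝ}
    (ht : t ∈ Set.Icc (-1 : ℝ) 1) :
    |((κ.descFactorial m : ℕ) : ℝ) * t ^ (κ - m)| ≤ (K : ℝ) ^ K := by
  have h1 : |t| ≤ 1 := abs_le.2 ht
  rw [abs_mul, abs_pow, abs_of_nonneg (by positivity : (0 : ℝ) ≤ (κ.descFactorial m : ℕ))]
  have h2 : ((κ.descFactorial m : ℕ) : ℝ) ≤ (K : ℝ) ^ K := by
    have : κ.descFactorial m ≤ K ^ K :=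
      (Nat.descFactorial_le_pow κ m).trans
        ((Nat.pow_le_pow_left hκ m).trans (Nat.pow_le_pow_right hK hm))
    exact_mod_cast this
  have h3 : |t| ^ (κ - m) ≤ 1 := pow_le_one₀ (abs_nonneg _) h1
  calc _ ≤ (K : ℝ) ^ K * 1 := by gcongr
    _ = _ := mul_one _

/-- If `αᵢ > 0` maximises `A^i |αᵢ|` with `A = 2 n K^K`, the terms of higher degree than `kᵢ` are
so small, compared with `αᵢ`, that the `kᵢ`-th derivative of the phase is at least `αᵢ / 2`;
the terms of lower degree are killed by the differentiation. -/
theorem phase_deriv_lower {n K : ℕ} (hn : 1 ≤ n) (k : Fin n → ℕ) (hkmono : StrictMono k)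
    (hK1 : 1 ≤ K) (hK : ∀ i, k i ≤ K) (α : Fin n → ℝ) (i : Fin n) (hi : 0 < α i)
    (hmax : ∀ i' : Fin n, (2 * n * (K : ℝ) ^ K) ^ (i' : ℕ) * |α i'| ≤
      (2 * n * (K : ℝ) ^ K) ^ (i : ℕ) * |α i|)
    {t : ℝ} (ht : t ∈ Set.Icc (-1 : ℝ) 1) :
    α i / 2 ≤ (Polynomial.derivative^[k i] (phase k α)).eval t := by
  set A : ℝ := 2 * n * (K : ℝ) ^ K with hA
  have hn' : (1 : ℝ) ≤ n := by exact_mod_cast hn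
  have hK' : (1 : ℝ) ≤ (K : ℝ) ^ K := one_le_pow₀ (by exact_mod_cast hK1)
  have hA1 : 1 ≤ A := by rw [hA]; nlinarith
  rw [phase_deriv_eval, ← Finset.add_sum_erase _ _ (Finset.mem_univ i)]
  have hmain : α i ≤ α i * ((k i).descFactorial (k i) * t ^ (k i - k i)) := by
    rw [Nat.descFactorial_self, Nat.sub_self, pow_zero, mul_one]
    have : (1 : ℝ) ≤ ((k i).factorial : ℕ) := by exact_mod_cast Nat.factorial_pos _
    nlinarith
  have hrest : |∑ x ∈ Finset.univ.erase i,
      α x * ((k x).descFactorial (k i) * t ^ (k x - k i))| ≤ α i / 2 := by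
    refine (Finset.abs_sum_le_sum_abs _ _).trans ?_
    have hterm : ∀ x ∈ Finset.univ.erase i,
        |α x * ((k x).descFactorial (k i) * t ^ (k x - k i))| ≤ α i / (2 * n) := by
      intro x hx
      have hxi : x ≠ i := Finset.ne_of_mem_erase hx
      rcases lt_or_gt_of_ne hxi with hlt | hgt
      · rw [Nat.descFactorial_eq_zero_iff_lt.2 (hkmono hlt)]
        simp; positivity
      · rw [abs_mul]
        have h1 : A * |α x| ≤ α i := by
          have h2 := hmax x
          rw [abs_of_pos hi] at h2
          have h3 : A ^ ((i : ℕ) + 1) ≤ A ^ (x : ℕ) := pow_le_pow_right₀ hA1 hgt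
          have h4 : A ^ ((i : ℕ) + 1) * |α x| ≤ A ^ (i : ℕ) * α i :=
            (mul_le_mul_of_nonneg_right h3 (abs_nonneg _)).trans h2
          rw [pow_succ, mul_assoc] at h4
          exact le_of_mul_le_mul_left h4 (by positivity)
        have h2 := descFactorial_term_le (hK x) (hK i) hK1 ht
        rw [le_div_iff₀ (by positivity)]
        calc _ ≤ |α x| * (K : ℝ) ^ K * (2 * n) := by gcongr
          _ = A * |α x| := by rw [hA]; ring
          _ ≤ α i := h1
    refine (Finset.sum_le_sum hterm).trans ?_
    rw [Finset.sum_const, nsmul_eq_mul]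
    have hcard : ((Finset.univ.erase i).card : ℝ) ≤ n := by
      have := Finset.card_le_univ (Finset.univ.erase i)
      rw [Fintype.card_fin] at this
      exact_mod_cast this
    calc _ ≤ (n : ℝ) * (α i / (2 * n)) := by gcongr
      _ = α i / 2 := by field_simp
  have := (abs_le.1 hrest).1
  linarith

/-- The index `i` maximising `A^i |αᵢ|` has `|αᵢ| ≫ ‖α‖`, so van der Corput's lemma applies on the
whole of `[-1, 1]` with the derivative of order `kᵢ ≤ K`. When `kᵢ = 1` the second derivative need
not have constant sign, and the trivial bound `≪ ‖α‖` for it is used instead. -/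
theorem one_var_bound_large {n K : ℕ} (hn : 1 ≤ n) (k : Fin n → ℕ) (hk1 : ∀ i, 1 ≤ k i)
    (hkmono : StrictMono k) (hK1 : 1 ≤ K) (hK : ∀ i, k i ≤ K) :
    ∃ C : ℝ, 0 < C ∧ ∀ α : Fin n → ℝ, 1 ≤ ‖α‖ →
      ‖∫ t in (-1 : ℝ)..1, e (∑ i, α i * t ^ k i)‖ ≤ C * ‖α‖ ^ (-(1 / (K : ℝ))) := by
  choose V hV0 hV using van_der_corput
  set A : ℝ := 2 * n * (K : ℝ) ^ K with hA
  have hn' : (1 : ℝ) ≤ n := by exact_mod_cast hn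
  have hKR : (1 : ℝ) ≤ K := by exact_mod_cast hK1
  have hK' : (1 : ℝ) ≤ (K : ℝ) ^ K := one_le_pow₀ hKR
  have hA1 : 1 ≤ A := by rw [hA]; nlinarith
  set c : ℝ := (A ^ n)⁻¹ / 2 with hc
  have hc0 : 0 < c := by positivity
  have hc1 : c ≤ 1 := by
    have : (A ^ n)⁻¹ ≤ 1 := inv_le_one_of_one_le₀ (one_le_pow₀ hA1)
    rw [hc]; linarith
  set M : ℝ := n * ((K + 1 : ℕ) : ℝ) ^ (K + 1) with hM
  set S : ℝ := ∑ j ∈ Finset.range (K + 1), V j with hS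
  have hS0 : 0 ≤ S := Finset.sum_nonneg (fun j _ => (hV0 j).le)
  have hpos : ∀ (α : Fin n → ℝ) (i : Fin n), 1 ≤ ‖α‖ → 0 < α i →
      (∀ i' : Fin n, A ^ (i' : ℕ) * |α i'| ≤ A ^ (i : ℕ) * |α i|) →
      ‖∫ t in (-1 : ℝ)..1, e (∑ i, α i * t ^ k i)‖ ≤
        (S / c + 2 / c + 2 * M / c ^ 2) * ‖α‖ ^ (-(1 / (K : ℝ))) := by
    intro α i hα hi hmax
    have hα0 : 0 < ‖α‖ := by linarith
    have hsize : c * ‖α‖ ≤ α i / 2 := by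
      have h1 : ‖α‖ ≤ A ^ n * α i := by
        rw [pi_norm_le_iff_of_nonneg (by positivity)]
        intro i'
        rw [Real.norm_eq_abs]
        have h2 := hmax i'
        rw [abs_of_pos hi] at h2
        calc |α i'| ≤ A ^ (i' : ℕ) * |α i'| :=
              le_mul_of_one_le_left (abs_nonneg _) (one_le_pow₀ hA1)
          _ ≤ A ^ (i : ℕ) * α i := h2
          _ ≤ A ^ n * α i := by
            gcongr
            exact i.2.le
      have h3 : 0 < A ^ n := by positivity
      rw [hc]
      have : (A ^ n)⁻¹ * ‖α‖ ≤ α i := by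
        rw [inv_mul_le_iff₀ h3]; exact h1
      linarith
    have hlow : ∀ t ∈ Set.Icc (-1 : ℝ) 1,
        c * ‖α‖ ≤ (Polynomial.derivative^[k i] (phase k α)).eval t := fun t ht =>
      hsize.trans (phase_deriv_lower hn k hkmono hK1 hK α i hi hmax ht)
    have hμ0 : 0 < c * ‖α‖ := by positivity
    simp only [← phase_eval]
    have hexp : ∀ j : ℕ, 1 ≤ j → j ≤ K → ‖α‖ ^ (-(1 / (j : ℝ))) ≤ ‖α‖ ^ (-(1 / (K : ℝ))) := by
      intro j hj hjK
      refine Real.rpow_le_rpow_of_exponent_le hα ?_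
      have hj' : (0 : ℝ) < j := by exact_mod_cast hj
      have : (j : ℝ) ≤ K := by exact_mod_cast hjK
      have := one_div_le_one_div_of_le hj' this
      linarith
    obtain ⟨j, hj⟩ : ∃ j, k i = j + 1 := ⟨k i - 1, by have := hk1 i; omega⟩
    have hY0 : 0 < ‖α‖ ^ (-(1 / (K : ℝ))) := Real.rpow_pos_of_pos hα0 _
    by_cases hj0 : j = 0
    · subst hj0
      rw [hj] at hlow
      have hM' : ∀ t ∈ Set.Icc (-1 : ℝ) 1,
          |(phase k α).derivative.derivative.eval t| ≤ M * ‖α‖ := by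
        intro t ht
        have h2 := phase_deriv_eval k α 2 t
        simp only [Function.iterate_succ, Function.iterate_zero, Function.comp_apply, id] at h2
        rw [h2]
        refine (Finset.abs_sum_le_sum_abs _ _).trans ?_
        have hterm : ∀ x ∈ (Finset.univ : Finset (Fin n)),
            |α x * ((k x).descFactorial 2 * t ^ (k x - 2))| ≤
              ‖α‖ * ((K + 1 : ℕ) : ℝ) ^ (K + 1) := by
          intro x _
          rw [abs_mul]
          have h3 := descFactorial_term_le (κ := k x) (m := 2) (K := K + 1)
            ((hK x).trans (Nat.le_succ K)) (by omega) (by omega) ht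
          have h4 : |α x| ≤ ‖α‖ := norm_le_pi_norm α x
          gcongr
        refine (Finset.sum_le_sum hterm).trans (le_of_eq ?_)
        rw [Finset.sum_const, nsmul_eq_mul, Finset.card_univ, Fintype.card_fin, hM]; ring
      have hb := first_deriv_bound_bdd (phase k α) (by norm_num : (-1 : ℝ) ≤ 1) hμ0 hlow hM'
      refine hb.trans ?_
      have h5 : 2 / (c * ‖α‖) + M * ‖α‖ / (c * ‖α‖) ^ 2 * (1 - -1)
          = (2 / c + 2 * M / c ^ 2) * ‖α‖ ^ (-(1 / ((1 : ℕ) : ℝ))) := by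
        rw [Nat.cast_one, div_one, Real.rpow_neg_one]; field_simp; ring
      rw [h5]
      have := hexp 1 le_rfl hK1
      have hSc : 0 ≤ S / c := by positivity
      calc _ ≤ (2 / c + 2 * M / c ^ 2) * ‖α‖ ^ (-(1 / (K : ℝ))) := by gcongr
        _ ≤ _ := by gcongr; linarith
    · rw [hj] at hlow
      have hb := hV j (phase k α) (-1) 1 (c * ‖α‖) (by norm_num) hμ0 hlow (fun h => absurd h hj0)
      refine hb.trans ?_
      have hjK : j + 1 ≤ K := hj ▸ hK i
      have hVS : V j ≤ S :=
        Finset.single_le_sum (f := V) (fun j _ => (hV0 j).le) (Finset.mem_range.2 (by omega))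
      have h6 : (c * ‖α‖) ^ (-(1 / ((j : ℝ) + 1))) ≤ c⁻¹ * ‖α‖ ^ (-(1 / (K : ℝ))) := by
        rw [Real.mul_rpow hc0.le hα0.le]
        have h7 := hexp (j + 1) (by omega) hjK
        push_cast at h7
        have h8 : c ^ (-(1 / ((j : ℝ) + 1))) ≤ c⁻¹ := by
          rw [← Real.rpow_neg_one]
          refine Real.rpow_le_rpow_of_exponent_ge hc0 hc1 ?_
          have : 1 / ((j : ℝ) + 1) ≤ 1 := by
            rw [div_le_one (by positivity)]; linarith [(Nat.cast_nonneg j : (0 : ℝ) ≤ j)]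
          linarith
        gcongr
      have hM0 : 0 ≤ M := by positivity
      calc _ ≤ S * (c⁻¹ * ‖α‖ ^ (-(1 / (K : ℝ)))) := by
            gcongr
        _ = S / c * ‖α‖ ^ (-(1 / (K : ℝ))) := by ring
        _ ≤ _ := by
          gcongr
          have : 0 ≤ 2 / c + 2 * M / c ^ 2 := by positivity
          linarith
  refine ⟨S / c + 2 / c + 2 * M / c ^ 2, by positivity, fun α hα => ?_⟩
  obtain ⟨i, -, himax⟩ := Finset.exists_max_image (Finset.univ : Finset (Fin n))
    (fun i => A ^ (i : ℕ) * |α i|) ⟨⟨0, hn⟩, Finset.mem_univ _⟩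
  have hmax : ∀ i' : Fin n, A ^ (i' : ℕ) * |α i'| ≤ A ^ (i : ℕ) * |α i| :=
    fun i' => himax i' (Finset.mem_univ _)
  rcases lt_trichotomy (α i) 0 with hneg | hzero | hpos'
  · have := hpos (-α) i (by rwa [norm_neg]) (by simpa using hneg) (by simpa using hmax)
    rw [norm_neg] at this
    simp only [Pi.neg_apply, neg_mul, Finset.sum_neg_distrib, norm_integral_e_neg] at this
    exact this
  · exfalso
    have hz : α = 0 := by
      ext i'
      have := hmax i'
      rw [hzero, abs_zero, mul_zero] at this
      have h2 : 0 < A ^ (i' : ℕ) := by positivity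
      have h3 : |α i'| ≤ 0 := by
        by_contra h; push Not at h; nlinarith [mul_pos h2 h]
      simpa using h3
    rw [hz, norm_zero] at hα
    linarith
  · exact hpos α i hα hpos' hmax

theorem one_var_bound {n K : ℕ} (hn : 1 ≤ n) (k : Fin n → ℕ) (hk1 : ∀ i, 1 ≤ k i)
    (hkmono : StrictMono k) (hK1 : 1 ≤ K) (hK : ∀ i, k i ≤ K) :
    ∃ C : ℝ, 0 < C ∧ ∀ α : Fin n → ℝ,
      ‖∫ t in (-1 : ℝ)..1, e (∑ i, α i * t ^ k i)‖ ≤ C * (1 + ‖α‖) ^ (-(1 / (K : ℝ))) := by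
  obtain ⟨C, hC, hb⟩ := one_var_bound_large hn k hk1 hkmono hK1 hK
  have hKR : (1 : ℝ) ≤ K := by exact_mod_cast hK1
  -- `1 + ‖α‖ ≤ 2 max(1, ‖α‖)`, and `2^{1/K} ≤ 2`
  have h2 : (2 : ℝ)⁻¹ ≤ 2 ^ (-(1 / (K : ℝ))) := by
    rw [← Real.rpow_neg_one]
    refine Real.rpow_le_rpow_of_exponent_le (by norm_num) ?_
    have : 1 / (K : ℝ) ≤ 1 := by rw [div_le_one (by positivity)]; exact hKR
    linarith
  have hneg : -(1 / (K : ℝ)) ≤ 0 := by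
    have : 0 ≤ 1 / (K : ℝ) := by positivity
    linarith
  refine ⟨2 * C + 4, by positivity, fun α => ?_⟩
  have hα0 := norm_nonneg α
  have hY : 0 < (1 + ‖α‖) ^ (-(1 / (K : ℝ))) := Real.rpow_pos_of_pos (by linarith) _
  by_cases hα : 1 ≤ ‖α‖
  · have h3 : (2 * ‖α‖) ^ (-(1 / (K : ℝ))) ≤ (1 + ‖α‖) ^ (-(1 / (K : ℝ))) :=
      Real.rpow_le_rpow_of_nonpos (by linarith) (by linarith) hneg
    rw [Real.mul_rpow (by norm_num) hα0] at h3
    have hX : 0 < ‖α‖ ^ (-(1 / (K : ℝ))) := Real.rpow_pos_of_pos (by linarith) _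
    have h4 : ‖α‖ ^ (-(1 / (K : ℝ))) ≤ 2 * (1 + ‖α‖) ^ (-(1 / (K : ℝ))) := by nlinarith
    refine (hb α hα).trans ?_
    nlinarith [mul_le_mul_of_nonneg_left h4 hC.le]
  · push Not at hα
    have h3 : (2 : ℝ) ^ (-(1 / (K : ℝ))) ≤ (1 + ‖α‖) ^ (-(1 / (K : ℝ))) :=
      Real.rpow_le_rpow_of_nonpos (by linarith) (by linarith) hneg
    refine (norm_integral_e_le _ (by norm_num)).trans ?_
    nlinarith [mul_pos hC hY]

/-! ### Convergence of the singular integral -/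

theorem sum_mul_dF {n s : ℕ} (k : Fin n → ℕ) (u : Fin n → Fin s → ℤ) (β : Fin n → ℝ)
    (t : Fin s → ℝ) :
    ∑ i, β i * dF k u i t = ∑ j, ∑ i, (β i * (u i j : ℝ)) * t j ^ k i := by
  simp only [dF, Finset.mul_sum]
  rw [Finset.sum_comm]
  simp only [mul_assoc]

theorem restrict_cube (s : ℕ) :
    (volume : Measure (Fin s → ℝ)).restrict (Set.Icc (fun _ => (-1 : ℝ)) (fun _ => 1)) =
      Measure.pi (fun _ => (volume : Measure ℝ).restrict (Set.Icc (-1) 1)) := by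
  rw [← Set.pi_univ_Icc, volume_pi, Measure.restrict_pi_pi]

theorem singIntInner_eq_prod {n s : ℕ} (k : Fin n → ℕ) (u : Fin n → Fin s → ℤ)
    (β : Fin n → ℝ) :
    singIntInner k u β =
      ∏ j, ∫ t in (-1 : ℝ)..1, e (∑ i, (β i * (u i j : ℝ)) * t ^ k i) := by
  unfold singIntInner
  have h : ∀ t : Fin s → ℝ, e (∑ i, β i * dF k u i t) =
      ∏ j, e (∑ i, (β i * (u i j : ℝ)) * t j ^ k i) := fun t => by rw [sum_mul_dF, e_sum]
  simp only [h]
  rw [restrict_cube, integral_fintype_prod_eq_prod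
    (fun j x => e (∑ i, (β i * (u i j : ℝ)) * x ^ k i))]
  refine Finset.prod_congr rfl (fun j _ => ?_)
  rw [intervalIntegral.integral_of_le (by norm_num), integral_Icc_eq_integral_Ioc]

theorem continuous_dF {n s : ℕ} (k : Fin n → ℕ) (u : Fin n → Fin s → ℤ) (i : Fin n) :
    Continuous (fun t : Fin s → ℝ => dF k u i t) := by
  unfold dF; fun_prop

theorem continuous_singIntegrand {n s : ℕ} (k : Fin n → ℕ) (u : Fin n → Fin s → ℤ) :
    Continuous (fun p : (Fin n → ℝ) × (Fin s → ℝ) => e (∑ i, p.1 i * dF k u i p.2)) := by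
  refine continuous_e.comp (continuous_finsetSum _ (fun i _ => ?_))
  have := continuous_dF k u i
  fun_prop

theorem aestronglyMeasurable_singIntInner {n s : ℕ} (k : Fin n → ℕ) (u : Fin n → Fin s → ℤ) :
    AEStronglyMeasurable (singIntInner k u) := by
  have := StronglyMeasurable.integral_prod_right
    (f := fun (β : Fin n → ℝ) (t : Fin s → ℝ) => e (∑ i, β i * dF k u i t)) (continuous_singIntegrand k u).stronglyMeasurable
    (ν := (volume : Measure (Fin s → ℝ)).restrict (Set.Icc (fun _ => (-1 : ℝ)) (fun _ => 1)))
  exact this.aestronglyMeasurable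

/-- The inner integral is a product of `s` one-variable integrals, so it is
`≪ (1 + ‖β‖)^{-s/K}`, and `s / K > n`. -/
theorem integrable_singIntInner {n s K : ℕ} (hn : 1 ≤ n) (k : Fin n → ℕ) (hk1 : ∀ i, 1 ≤ k i)
    (hkmono : StrictMono k) (hK1 : 1 ≤ K) (hK : ∀ i, k i ≤ K) (hs : n * K + 1 ≤ s)
    (u : Fin n → Fin s → ℤ) (hu : ∀ i j, u i j ≠ 0) :
    Integrable (singIntInner k u) := by
  obtain ⟨C, hC, hb⟩ := one_var_bound hn k hk1 hkmono hK1 hK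
  have hK0 : (0 : ℝ) < K := by exact_mod_cast hK1
  have hint : Integrable (fun β : Fin n → ℝ => C ^ s * (1 + ‖β‖) ^ (-((s : ℝ) / K))) := by
    refine (integrable_one_add_norm ?_).const_mul _
    rw [Module.finrank_fin_fun, lt_div_iff₀ hK0]
    have : n * K < s := hs
    exact_mod_cast this
  refine hint.mono' (aestronglyMeasurable_singIntInner k u) (Filter.Eventually.of_forall ?_)
  intro β
  have hβ : 0 < 1 + ‖β‖ := by have := norm_nonneg β; linarith
  rw [singIntInner_eq_prod, norm_prod]
  have hfac : ∀ j ∈ (Finset.univ : Finset (Fin s)),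
      ‖∫ t in (-1 : ℝ)..1, e (∑ i, (β i * (u i j : ℝ)) * t ^ k i)‖ ≤
        C * (1 + ‖β‖) ^ (-(1 / (K : ℝ))) := by
    intro j _
    refine (hb (fun i => β i * (u i j : ℝ))).trans ?_
    -- the coefficients are nonzero integers, so they do not shrink `β`
    have hle : ‖β‖ ≤ ‖fun i => β i * (u i j : ℝ)‖ := by
      rw [pi_norm_le_iff_of_nonneg (norm_nonneg _)]
      intro i
      refine le_trans ?_ (norm_le_pi_norm (fun i => β i * (u i j : ℝ)) i)
      rw [norm_mul]
      refine le_mul_of_one_le_right (norm_nonneg _) ?_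
      rw [Real.norm_eq_abs]
      exact_mod_cast Int.one_le_abs (hu i j)
    have : (1 + ‖fun i => β i * (u i j : ℝ)‖) ^ (-(1 / (K : ℝ))) ≤
        (1 + ‖β‖) ^ (-(1 / (K : ℝ))) := by
      refine Real.rpow_le_rpow_of_nonpos hβ (by linarith) ?_
      have : 0 ≤ 1 / (K : ℝ) := by positivity
      linarith
    gcongr
  refine (Finset.prod_le_prod (fun j _ => norm_nonneg _) hfac).trans (le_of_eq ?_)
  rw [Finset.prod_const, Finset.card_univ, Fintype.card_fin, mul_pow, ← Real.rpow_natCast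
    ((1 + ‖β‖) ^ (-(1 / (K : ℝ)))), ← Real.rpow_mul hβ.le]
  congr 2
  ring

/-! ### Gaussian smoothing -/

/-- The Gaussian-smoothed singular integral at scale `ε`. -/
noncomputable def smoothInt {n s : ℕ} (k : Fin n → ℕ) (u : Fin n → Fin s → ℤ) (ε : ℝ) : ℂ :=
  ∫ β : Fin n → ℝ, singIntInner k u β * ((Real.exp (-(ε ^ 2 * ∑ i, β i ^ 2)) : ℝ) : ℂ)

theorem tendsto_smoothInt {n s : ℕ} (k : Fin n → ℕ) (u : Fin n → Fin s → ℤ)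
    (hI : Integrable (singIntInner k u)) :
    Filter.Tendsto (smoothInt k u) (nhdsWithin 0 (Set.Ioi 0)) (nhds (singInt k u)) := by
  refine tendsto_integral_filter_of_dominated_convergence (fun β => ‖singIntInner k u β‖)
    (Filter.Eventually.of_forall (fun ε => ?_)) (Filter.Eventually.of_forall (fun ε => ?_))
    hI.norm (Filter.Eventually.of_forall (fun β => ?_))
  · exact hI.aestronglyMeasurable.mul (Continuous.aestronglyMeasurable (by fun_prop))
  · refine Filter.Eventually.of_forall (fun β => ?_)
    rw [norm_mul, Complex.norm_real, Real.norm_of_nonneg (Real.exp_pos _).le]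
    refine mul_le_of_le_one_right (norm_nonneg _) (Real.exp_le_one_iff.2 ?_)
    have : 0 ≤ ε ^ 2 * ∑ i, β i ^ 2 :=
      mul_nonneg (sq_nonneg _) (Finset.sum_nonneg (fun i _ => sq_nonneg _))
    linarith
  · have hc : Continuous (fun ε : ℝ =>
        singIntInner k u β * ((Real.exp (-(ε ^ 2 * ∑ i, β i ^ 2)) : ℝ) : ℂ)) := by fun_prop
    have := hc.tendsto 0
    simp only [ne_eq, OfNat.ofNat_ne_zero, not_false_eq_true, zero_pow, zero_mul, neg_zero,
      Real.exp_zero, Complex.ofReal_one, mul_one] at this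
    exact this.mono_left nhdsWithin_le_nhds

theorem gaussian_one (ε : ℝ) (hε : 0 < ε) (x : ℝ) :
    ∫ b : ℝ, e (b * x) * ((Real.exp (-(ε ^ 2 * b ^ 2)) : ℝ) : ℂ) =
      ((Real.sqrt Real.pi / ε * Real.exp (-(Real.pi * x / ε) ^ 2) : ℝ) : ℂ) := by
  have h := fourierIntegral_gaussian (b := ((ε ^ 2 : ℝ) : ℂ))
    (by rw [Complex.ofReal_re]; positivity) ((2 * Real.pi * x : ℝ) : ℂ)
  have hL : ∀ b : ℝ, e (b * x) * ((Real.exp (-(ε ^ 2 * b ^ 2)) : ℝ) : ℂ) =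
      Complex.exp (Complex.I * ((2 * Real.pi * x : ℝ) : ℂ) * b) *
        Complex.exp (-((ε ^ 2 : ℝ) : ℂ) * (b : ℂ) ^ 2) := by
    intro b
    rw [e]; push_cast
    congr 2 <;> ring
  simp only [hL, h]
  have h1 : ((Real.pi : ℂ) / ((ε ^ 2 : ℝ) : ℂ)) ^ (1 / 2 : ℂ) =
      ((Real.sqrt Real.pi / ε : ℝ) : ℂ) := by
    have h2 : ((Real.pi : ℂ) / ((ε ^ 2 : ℝ) : ℂ)) = ((Real.pi / ε ^ 2 : ℝ) : ℂ) := by push_cast; rfl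
    have h3 : (1 / 2 : ℂ) = ((1 / 2 : ℝ) : ℂ) := by push_cast; rfl
    rw [h2, h3, ← Complex.ofReal_cpow (by positivity), ← Real.sqrt_eq_rpow,
      Real.sqrt_div Real.pi_pos.le, Real.sqrt_sq hε.le]
  rw [h1, Complex.ofReal_mul (Real.sqrt Real.pi / ε), Complex.ofReal_exp]
  congr 2
  push_cast
  have : (ε : ℂ) ≠ 0 := by exact_mod_cast hε.ne'
  field_simp
  ring

theorem gaussian_multi {n : ℕ} (ε : ℝ) (hε : 0 < ε) (x : Fin n → ℝ) :
    ∫ β : Fin n → ℝ, e (∑ i, β i * x i) * ((Real.exp (-(ε ^ 2 * ∑ i, β i ^ 2)) : ℝ) : ℂ) =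
      ((∏ i, (Real.sqrt Real.pi / ε * Real.exp (-(Real.pi * x i / ε) ^ 2)) : ℝ) : ℂ) := by
  have h : ∀ β : Fin n → ℝ,
      e (∑ i, β i * x i) * ((Real.exp (-(ε ^ 2 * ∑ i, β i ^ 2)) : ℝ) : ℂ) =
      ∏ i, (e (β i * x i) * ((Real.exp (-(ε ^ 2 * β i ^ 2)) : ℝ) : ℂ)) := by
    intro β
    rw [Finset.prod_mul_distrib, e_sum, ← Complex.ofReal_prod, ← Real.exp_sum,
      Finset.sum_neg_distrib, Finset.mul_sum]
  simp only [h]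
  rw [integral_fintype_prod_volume_eq_prod
    (fun i b => e (b * x i) * ((Real.exp (-(ε ^ 2 * b ^ 2)) : ℝ) : ℂ))]
  simp only [gaussian_one ε hε]
  push_cast
  rfl

theorem integrable_gaussian_pi {n : ℕ} (ε : ℝ) (hε : 0 < ε) :
    Integrable (fun β : Fin n → ℝ => Real.exp (-(ε ^ 2 * ∑ i, β i ^ 2))) := by
  have h := Integrable.fintype_prod (ι := Fin n) (μ := fun _ => (volume : Measure ℝ))
    (f := fun _ b => Real.exp (-(ε ^ 2) * b ^ 2))
    (fun _ => integrable_exp_neg_mul_sq (by positivity))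
  rw [volume_pi]
  refine h.congr (Filter.Eventually.of_forall (fun β => ?_))
  simp only
  rw [← Real.exp_sum, Finset.mul_sum, ← Finset.sum_neg_distrib]
  simp only [neg_mul]

/-- By Fubini and the Fourier transform of the Gaussian, the smoothed singular integral averages over
the cube a positive kernel concentrated where `|F(t)| ≪ ε`; in particular it is real. -/
theorem smoothInt_eq {n s : ℕ} (k : Fin n → ℕ) (u : Fin n → Fin s → ℤ) (ε : ℝ) (hε : 0 < ε) :
    smoothInt k u ε = ((∫ t in Set.Icc (fun _ : Fin s => (-1 : ℝ)) (fun _ => 1),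
      ∏ i, (Real.sqrt Real.pi / ε * Real.exp (-(Real.pi * dF k u i t / ε) ^ 2)) : ℝ) : ℂ) := by
  unfold smoothInt singIntInner
  simp only [← integral_mul_const]
  rw [integral_integral_swap]
  · rw [← integral_complex_ofReal]
    refine integral_congr_ae (Filter.Eventually.of_forall (fun t => ?_))
    exact gaussian_multi ε hε (fun i => dF k u i t)
  · have h1 : Integrable (fun p : (Fin n → ℝ) × (Fin s → ℝ) =>
        Real.exp (-(ε ^ 2 * ∑ i, p.1 i ^ 2)) * 1)
        ((volume : Measure (Fin n → ℝ)).prod ((volume : Measure (Fin s → ℝ)).restrict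
          (Set.Icc (fun _ : Fin s => (-1 : ℝ)) (fun _ => 1)))) := by
      refine (integrable_gaussian_pi ε hε).mul_prod (g := fun _ : Fin s → ℝ => (1 : ℝ)) ?_
      exact (continuous_const (y := (1 : ℝ))).integrableOn_Icc
    refine h1.mono' (Continuous.aestronglyMeasurable ?_) (Filter.Eventually.of_forall ?_)
    · have := continuous_singIntegrand k u
      simp only [Function.uncurry_def]
      fun_prop
    · rintro ⟨β, t⟩
      simp only [Function.uncurry]
      rw [norm_mul, norm_e, Complex.norm_real, Real.norm_of_nonneg (Real.exp_pos _).le]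
      linarith

/-! ### Volume near a nonsingular zero and positivity -/

/-- Near a zero `η` of `F : ℝ^s → ℝ^n` at which the derivative is onto, the set where `|F| ≤ ε` has
volume `≫ ε^n`.  With `B` a right inverse of the derivative, every `t` near `η` can be corrected to
an exact zero `t + B v₀`, so `|F (t + B v)| ≤ ε` for all `v` in a ball of radius `≫ ε` about `v₀`;
integrating over `t` and `v` and using translation invariance in `t` gives the bound. -/
theorem volume_near_zero {n s : ℕ} (F : (Fin s → ℝ) → (Fin n → ℝ)) (hF : Continuous F)
    (A : (Fin s → ℝ) →L[ℝ] (Fin n → ℝ)) (η : Fin s → ℝ) (hA : HasStrictFDerivAt F A η)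
    (hsurj : (A : (Fin s → ℝ) →ₗ[ℝ] (Fin n → ℝ)).range = ⊤) (hη : F η = 0) (U : Set (Fin s → ℝ))
    (hUm : MeasurableSet U) (hU : U ∈ nhds η) (hUfin : volume U ≠ ⊤) :
    ∃ c : ℝ, 0 < c ∧ ∃ ε₀ : ℝ, 0 < ε₀ ∧ ∀ ε : ℝ, 0 < ε → ε < ε₀ →
      c * ε ^ n ≤ (volume : Measure (Fin s → ℝ)).real {t | t ∈ U ∧ ∀ i, |F t i| ≤ ε} := by
  obtain ⟨B₀, hB₀⟩ := LinearMap.exists_rightInverse_of_surjective _ hsurj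
  set B : (Fin n → ℝ) →L[ℝ] (Fin s → ℝ) := LinearMap.toContinuousLinearMap B₀ with hBdef
  have hAB : ∀ v, A (B v) = v := fun v => LinearMap.congr_fun hB₀ v
  obtain ⟨L, S, hS, hLip⟩ := hA.exists_lipschitzOnWith
  obtain ⟨ρ, hρ, hball⟩ := Metric.mem_nhds_iff.1 (Filter.inter_mem hU hS)
  set b : ℝ := ‖B‖ + 1 with hb
  have hb0 : 0 < b := by positivity
  have hBle : ∀ v, ‖B v‖ ≤ b * ‖v‖ := fun v =>
    (B.le_opNorm v).trans (by rw [hb]; gcongr; linarith)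
  -- `(t, v) ↦ (t, F (t + B v))` has a surjective derivative at `(η, 0)`, hence is open there
  have hsolve : ∃ r > 0, ∀ t ∈ Metric.ball η r, t ∈ Metric.ball η (ρ / 2) ∧
      ∃ v₀ : Fin n → ℝ, ‖v₀‖ < ρ / (4 * b) ∧ F (t + B v₀) = 0 := by
    let Φ : (Fin s → ℝ) × (Fin n → ℝ) → (Fin s → ℝ) × (Fin n → ℝ) :=
      fun p => (p.1, F (p.1 + B p.2))
    have hΦ : HasStrictFDerivAt Φ ((ContinuousLinearMap.fst ℝ (Fin s → ℝ) (Fin n → ℝ)).prod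
        (A.comp (ContinuousLinearMap.fst ℝ (Fin s → ℝ) (Fin n → ℝ) +
          B.comp (ContinuousLinearMap.snd ℝ (Fin s → ℝ) (Fin n → ℝ))))) (η, 0) := by
      refine HasStrictFDerivAt.prodMk hasStrictFDerivAt_fst ?_
      have hin : HasStrictFDerivAt (fun p : (Fin s → ℝ) × (Fin n → ℝ) => p.1 + B p.2)
          (ContinuousLinearMap.fst ℝ (Fin s → ℝ) (Fin n → ℝ) +
          B.comp (ContinuousLinearMap.snd ℝ (Fin s → ℝ) (Fin n → ℝ))) (η, 0) :=
        ContinuousLinearMap.hasStrictFDerivAt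
          (ContinuousLinearMap.fst ℝ (Fin s → ℝ) (Fin n → ℝ) +
            B.comp (ContinuousLinearMap.snd ℝ (Fin s → ℝ) (Fin n → ℝ)))
      refine HasStrictFDerivAt.comp (g := F) (η, 0) ?_ hin
      simpa using hA
    have hmap := hΦ.map_nhds_eq_of_surj (by
      rw [LinearMap.range_eq_top]
      rintro ⟨x, y⟩
      refine ⟨(x, y - A x), ?_⟩
      simp [hAB])
    have hΦ0 : Φ (η, 0) = (η, 0) := by simp [Φ, hη]
    rw [hΦ0] at hmap
    have hN : Metric.ball η (ρ / 2) ×ˢ Metric.ball (0 : Fin n → ℝ) (ρ / (4 * b)) ∈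
        nhds (η, (0 : Fin n → ℝ)) :=
      prod_mem_nhds (Metric.ball_mem_nhds _ (by positivity)) (Metric.ball_mem_nhds _ (by positivity))
    have himg := hmap ▸ Filter.image_mem_map (m := Φ) hN
    have hcont : Filter.Tendsto (fun t : Fin s → ℝ => (t, (0 : Fin n → ℝ))) (nhds η)
        (nhds (η, 0)) := (Continuous.prodMk_left (0 : Fin n → ℝ)).tendsto η
    obtain ⟨r, hr, hsub⟩ := Metric.mem_nhds_iff.1 (hcont himg)
    refine ⟨r, hr, fun t ht => ?_⟩
    obtain ⟨⟨t', v⟩, ⟨h1, h2⟩, h3⟩ := hsub ht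
    simp only [Φ, Prod.mk.injEq] at h3
    obtain ⟨rfl, h3⟩ := h3
    exact ⟨h1, v, by simpa using h2, h3⟩
  obtain ⟨r, hr, hsolve⟩ := hsolve
  set d : ℝ := L * b + 1 with hd
  have hd0 : 0 < d := by positivity
  set R : ℝ := ρ / (2 * b) with hR
  have hR0 : 0 < R := by positivity
  refine ⟨(2 * r) ^ s * (2 / d) ^ n / (2 * R) ^ n, by positivity, d * (ρ / (4 * b)), by positivity,
    fun ε hε hε₀ => ?_⟩
  set E : Set (Fin s → ℝ) := {t | t ∈ U ∧ ∀ i, |F t i| ≤ ε} with hE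
  have hEm : MeasurableSet E := by
    refine hUm.inter ?_
    have : IsClosed {t | ∀ i, |F t i| ≤ ε} := by
      simp only [Set.ofPred_forall]
      exact isClosed_iInter (fun i => isClosed_le (by fun_prop) continuous_const)
    exact this.measurableSet
  have hEfin : volume E ≠ ⊤ := measure_ne_top_of_subset (fun t ht => ht.1) hUfin
  set T : Set ((Fin s → ℝ) × (Fin n → ℝ)) :=
    {p | p.2 ∈ Metric.ball (0 : Fin n → ℝ) R ∧ p.1 + B p.2 ∈ E} with hT
  have hTm : MeasurableSet T :=
    (measurable_snd Metric.isOpen_ball.measurableSet).inter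
      ((by fun_prop : Measurable (fun p : (Fin s → ℝ) × (Fin n → ℝ) => p.1 + B p.2)) hEm)
  have hlow : ENNReal.ofReal ((2 * r) ^ s) * ENNReal.ofReal ((2 * (ε / d)) ^ n) ≤
      ((volume : Measure (Fin s → ℝ)).prod (volume : Measure (Fin n → ℝ))) T := by
    rw [Measure.prod_apply hTm]
    have h1 : ∀ t ∈ Metric.ball η r, ENNReal.ofReal ((2 * (ε / d)) ^ n) ≤
        (volume : Measure (Fin n → ℝ)) (Prod.mk t ⁻¹' T) := by
      intro t ht
      obtain ⟨htρ, v₀, hv₀, hz⟩ := hsolve t ht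
      have hεd : ε / d < ρ / (4 * b) := by rw [div_lt_iff₀ hd0]; linarith
      have hsub : Metric.ball v₀ (ε / d) ⊆ Prod.mk t ⁻¹' T := by
        intro v hv
        have hvv : ‖v - v₀‖ < ε / d := by simpa [dist_eq_norm] using hv
        have hhalf : ρ / (4 * b) + ρ / (4 * b) = R := by rw [hR]; field_simp; norm_num
        have hvR : ‖v‖ < R := by
          have : ‖v‖ ≤ ‖v - v₀‖ + ‖v₀‖ := by simpa using norm_add_le (v - v₀) v₀
          linarith
        have hmem : ∀ w : Fin n → ℝ, ‖w‖ < R → t + B w ∈ Metric.ball η ρ := by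
          intro w hw
          rw [Metric.mem_ball, dist_eq_norm] at htρ ⊢
          have h2 : ‖t + B w - η‖ ≤ ‖t - η‖ + ‖B w‖ := by
            have := norm_add_le (t - η) (B w)
            rwa [show t - η + B w = t + B w - η by abel] at this
          have h3 : b * ‖w‖ < b * R := by gcongr
          have h4 : b * R = ρ / 2 := by rw [hR]; field_simp
          linarith [hBle w]
        have hv0R : ‖v₀‖ < R := by linarith [(by positivity : 0 < ρ / (4 * b))]
        refine ⟨by simpa using hvR, (hball (hmem v hvR)).1, fun i => ?_⟩
        have h5 := hLip.dist_le_mul _ (hball (hmem v hvR)).2 _ (hball (hmem v₀ hv0R)).2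
        rw [hz, dist_zero_right, dist_eq_norm, add_sub_add_left_eq_sub, ← map_sub] at h5
        have h6 : (L : ℝ) * ‖B (v - v₀)‖ ≤ L * (b * (ε / d)) := by
          gcongr
          exact (hBle _).trans (by gcongr)
        have h7 : (L : ℝ) * (b * (ε / d)) ≤ ε := by
          rw [← mul_assoc, mul_div_assoc', div_le_iff₀ hd0, hd]; nlinarith
        exact (norm_le_pi_norm (F (t + B v)) i).trans (h5.trans (h6.trans h7))
      refine le_trans (le_of_eq ?_) (measure_mono hsub)
      rw [Real.volume_pi_ball _ (by positivity), Fintype.card_fin]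
    calc _ = ∫⁻ _ in Metric.ball η r, ENNReal.ofReal ((2 * (ε / d)) ^ n) := by
          rw [lintegral_const, Measure.restrict_apply_univ, Real.volume_pi_ball _ hr,
            Fintype.card_fin, mul_comm]
      _ ≤ ∫⁻ t in Metric.ball η r, (volume : Measure (Fin n → ℝ)) (Prod.mk t ⁻¹' T) :=
          setLIntegral_mono' Metric.isOpen_ball.measurableSet h1
      _ ≤ _ := setLIntegral_le_lintegral _ _
  have hup : ((volume : Measure (Fin s → ℝ)).prod (volume : Measure (Fin n → ℝ))) T ≤
      volume E * ENNReal.ofReal ((2 * R) ^ n) := by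
    rw [Measure.prod_apply_symm hTm]
    calc _ ≤ ∫⁻ v, (Metric.ball (0 : Fin n → ℝ) R).indicator (fun _ => volume E) v := by
          refine lintegral_mono (fun v => ?_)
          by_cases hv : v ∈ Metric.ball (0 : Fin n → ℝ) R
          · rw [Set.indicator_of_mem hv]
            refine (measure_mono (t := (fun t => t + B v) ⁻¹' E) (fun t ht => ht.2)).trans ?_
            rw [measure_preimage_add_right]
          · rw [Set.indicator_of_notMem hv]
            have : (fun t => (t, v)) ⁻¹' T = ∅ := by
              ext t; simp only [Set.mem_preimage, Set.mem_empty_iff_false, iff_false]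
              exact fun h => hv h.1
            rw [this, measure_empty]
      _ = _ := by
          rw [lintegral_indicator Metric.isOpen_ball.measurableSet, lintegral_const,
            Measure.restrict_apply_univ, Real.volume_pi_ball _ hR0, Fintype.card_fin]
  have hfin := ENNReal.toReal_mono (ENNReal.mul_ne_top hEfin ENNReal.ofReal_ne_top)
    (hlow.trans hup)
  rw [ENNReal.toReal_mul, ENNReal.toReal_mul, ENNReal.toReal_ofReal (by positivity),
    ENNReal.toReal_ofReal (by positivity), ENNReal.toReal_ofReal (by positivity)] at hfin
  change _ ≤ (volume E).toReal
  rw [div_mul_eq_mul_div, div_le_iff₀ (by positivity)]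
  refine le_trans (le_of_eq ?_) hfin
  rw [mul_assoc, ← mul_pow]
  congr 2; ring

/-- The Jacobian matrix of the system at `η`. -/
noncomputable def jac {n s : ℕ} (k : Fin n → ℕ) (u : Fin n → Fin s → ℤ) (η : Fin s → ℝ) :
    Matrix (Fin n) (Fin s) ℝ :=
  Matrix.of fun i j => (k i : ℝ) * (u i j : ℝ) * η j ^ (k i - 1)

theorem hasStrictFDerivAt_system {n s : ℕ} (k : Fin n → ℕ) (u : Fin n → Fin s → ℤ)
    (η : Fin s → ℝ) :
    HasStrictFDerivAt (fun (t : Fin s → ℝ) (i : Fin n) => dF k u i t)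
      (LinearMap.toContinuousLinearMap (jac k u η).mulVecLin) η := by
  rw [hasStrictFDerivAt_pi']
  intro i
  have h : ∀ j : Fin s, HasStrictFDerivAt (fun t : Fin s → ℝ => (u i j : ℝ) * t j ^ k i)
      (((k i : ℝ) * (u i j : ℝ) * η j ^ (k i - 1)) •
        (ContinuousLinearMap.proj j : (Fin s → ℝ) →L[ℝ] ℝ)) η := by
    intro j
    have h1 : HasStrictFDerivAt (fun t : Fin s → ℝ => t j)
        (ContinuousLinearMap.proj j : (Fin s → ℝ) →L[ℝ] ℝ) η :=
      (ContinuousLinearMap.proj j : (Fin s → ℝ) →L[ℝ] ℝ).hasStrictFDerivAt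
    have h2 := ((hasStrictDerivAt_pow (k i) (η j)).const_mul (u i j : ℝ)).comp_hasStrictFDerivAt
      η h1
    refine h2.congr_fderiv ?_
    congr 1; ring
  have hsum := HasStrictFDerivAt.fun_sum (u := Finset.univ) (fun j _ => h j)
  refine hsum.congr_fderiv ?_
  ext x
  simp [jac, Matrix.mulVec, dotProduct]

theorem dF_smul {n s : ℕ} (k : Fin n → ℕ) (u : Fin n → Fin s → ℤ) (i : Fin n) (l : ℝ)
    (η : Fin s → ℝ) : dF k u i (l • η) = l ^ k i * dF k u i η := by
  simp only [dF, Pi.smul_apply, smul_eq_mul, mul_pow, Finset.mul_sum]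
  exact Finset.sum_congr rfl (fun j _ => by ring)

theorem jac_smul_rank {n s : ℕ} (k : Fin n → ℕ) (u : Fin n → Fin s → ℤ) {l : ℝ} (hl : 0 < l)
    (η : Fin s → ℝ) : (jac k u (l • η)).rank = (jac k u η).rank := by
  have h : jac k u (l • η) = Matrix.diagonal (fun i => l ^ (k i - 1)) * jac k u η := by
    ext i j
    simp [jac, Matrix.diagonal_mul, mul_pow]; ring
  rw [h, Matrix.rank_mul_eq_right_of_isUnit_det]
  rw [Matrix.det_diagonal, isUnit_iff_ne_zero]
  exact (Finset.prod_pos (fun i _ => pow_pos hl _)).ne'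

/-- On the set where all `|Fᵢ(t)| ≤ ε` the kernel is `≫ ε^{-n}`, and that set has volume `≫ ε^n`. -/
theorem smoothInt_lower {n s : ℕ} (k : Fin n → ℕ) (u : Fin n → Fin s → ℤ) (η : Fin s → ℝ)
    (hη : NonsingularSol k u η) :
    ∃ c : ℝ, 0 < c ∧ ∃ ε₀ : ℝ, 0 < ε₀ ∧ ∀ ε : ℝ, 0 < ε → ε < ε₀ →
      c ≤ ∫ t in Set.Icc (fun _ : Fin s => (-1 : ℝ)) (fun _ => 1),
      ∏ i, (Real.sqrt Real.pi / ε * Real.exp (-(Real.pi * dF k u i t / ε) ^ 2)) := by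
  -- rescale the solution into the interior of the cube
  set l : ℝ := (1 + ‖η‖)⁻¹ with hl
  have hη0 := norm_nonneg η
  have hl0 : 0 < l := by positivity
  have hlt : ∀ j, |(l • η) j| < 1 := by
    intro j
    have h1 : |η j| ≤ ‖η‖ := norm_le_pi_norm η j
    rw [Pi.smul_apply, smul_eq_mul, abs_mul, abs_of_pos hl0, hl, inv_mul_lt_iff₀ (by positivity)]
    linarith
  have hU : Set.Icc (fun _ : Fin s => (-1 : ℝ)) (fun _ => 1) ∈ nhds (l • η) :=
    pi_Icc_mem_nhds (fun j => (abs_lt.1 (hlt j)).1) (fun j => (abs_lt.1 (hlt j)).2)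
  have hrank : (jac k u (l • η)).rank = n := (jac_smul_rank k u hl0 η).trans hη.2
  have hsurj : (LinearMap.toContinuousLinearMap (jac k u (l • η)).mulVecLin :
      (Fin s → ℝ) →ₗ[ℝ] (Fin n → ℝ)).range = ⊤ := by
    refine Submodule.eq_top_of_finrank_eq ?_
    rw [Module.finrank_fin_fun]
    exact hrank
  have hzero : (fun i => dF k u i (l • η)) = (0 : Fin n → ℝ) := by
    funext i; rw [dF_smul, hη.1 i, mul_zero]; rfl
  have hcompact : IsCompact (Set.Icc (fun _ : Fin s => (-1 : ℝ)) (fun _ => 1)) := isCompact_Icc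
  obtain ⟨c, hc, ε₀, hε₀, hvol⟩ := volume_near_zero (fun t i => dF k u i t)
    (continuous_pi (fun i => continuous_dF k u i)) _ (l • η)
    (hasStrictFDerivAt_system k u (l • η)) hsurj hzero _
    measurableSet_Icc hU hcompact.measure_ne_top
  set w : ℝ := Real.sqrt Real.pi * Real.exp (-Real.pi ^ 2) with hw
  have hw0 : 0 < w := by positivity
  refine ⟨w ^ n * c, by positivity, ε₀, hε₀, fun ε hε hlt => ?_⟩
  set g : (Fin s → ℝ) → ℝ := fun t =>
    ∏ i, (Real.sqrt Real.pi / ε * Real.exp (-(Real.pi * dF k u i t / ε) ^ 2)) with hg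
  have hgc : Continuous g := by
    have := continuous_dF k u
    fun_prop
  have hg0 : ∀ t, 0 ≤ g t := fun t => Finset.prod_nonneg (fun i _ => by positivity)
  set E : Set (Fin s → ℝ) := {t | t ∈ Set.Icc (fun _ : Fin s => (-1 : ℝ)) (fun _ => 1) ∧
    ∀ i, |dF k u i t| ≤ ε} with hE
  have hEsub : E ⊆ Set.Icc (fun _ : Fin s => (-1 : ℝ)) (fun _ => 1) := fun t ht => ht.1
  have hEm : MeasurableSet E := by
    refine measurableSet_Icc.inter ?_
    have : IsClosed {t : Fin s → ℝ | ∀ i, |dF k u i t| ≤ ε} := by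
      simp only [Set.ofPred_forall]
      exact isClosed_iInter (fun i => isClosed_le (continuous_dF k u i).abs continuous_const)
    exact this.measurableSet
  have hgi : IntegrableOn g (Set.Icc (fun _ : Fin s => (-1 : ℝ)) (fun _ => 1)) :=
    hgc.integrableOn_Icc
  have hge : ∀ t ∈ E, (w / ε) ^ n ≤ g t := by
    intro t ht
    have : (w / ε) ^ n = ∏ _i : Fin n, (w / ε) := by
      rw [Finset.prod_const, Finset.card_univ, Fintype.card_fin]
    rw [this]
    refine Finset.prod_le_prod (fun i _ => by positivity) (fun i _ => ?_)
    rw [hw, mul_div_right_comm]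
    have h2 : (Real.pi * dF k u i t / ε) ^ 2 ≤ Real.pi ^ 2 := by
      rw [mul_div_assoc, mul_pow]
      have : (dF k u i t / ε) ^ 2 ≤ 1 := by
        rw [sq_le_one_iff_abs_le_one, abs_div, abs_of_pos hε, div_le_one hε]
        exact ht.2 i
      nlinarith [sq_nonneg Real.pi]
    gcongr
  have h3 : (w / ε) ^ n * (volume : Measure (Fin s → ℝ)).real E ≤ ∫ t in E, g t :=
    setIntegral_ge_of_const_le_real hEm (measure_ne_top_of_subset hEsub hcompact.measure_ne_top)
      hge (hgi.mono_set hEsub)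
  have h4 : ∫ t in E, g t ≤ ∫ t in Set.Icc (fun _ : Fin s => (-1 : ℝ)) (fun _ => 1), g t :=
    setIntegral_mono_set hgi (Filter.Eventually.of_forall hg0) hEsub.eventuallyLE
  refine le_trans ?_ (h3.trans h4)
  calc w ^ n * c = (w / ε) ^ n * (c * ε ^ n) := by rw [div_pow]; field_simp
    _ ≤ _ := by gcongr; exact hvol ε hε hlt

theorem stmt15 (n s : ℕ) (hn : 1 ≤ n) (k : Fin n → ℕ)
    (hk1 : 1 ≤ k ⟨0, hn⟩) (hkmono : StrictMono k)
    (hs : n * k ⟨n - 1, by omega⟩ + 1 ≤ s)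
    (u : Fin n → Fin s → ℤ) (hu : ∀ i j, u i j ≠ 0) :
    Integrable (singIntInner k u) ∧
    ((∃ η : Fin s → ℝ, NonsingularSol k u η) →
      ∃ c : ℝ, 0 < c ∧ singInt k u = (c : ℂ)) := by
  have hk1' : ∀ i, 1 ≤ k i := fun i =>
    hk1.trans (hkmono.monotone (Fin.mk_le_of_le_val (Nat.zero_le _)))
  have hK : ∀ i, k i ≤ k ⟨n - 1, by omega⟩ := fun i =>
    hkmono.monotone (Fin.le_def.2 (by have := i.2; simp only; omega))
  have hI : Integrable (singIntInner k u) :=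
    integrable_singIntInner hn k hk1' hkmono (hk1' _) hK hs u hu
  refine ⟨hI, ?_⟩
  rintro ⟨η, hη⟩
  obtain ⟨c, hc, ε₀, hε₀, hlow⟩ := smoothInt_lower k u η hη
  have hlim := tendsto_smoothInt k u hI
  have hre : c ≤ (singInt k u).re := by
    refine ge_of_tendsto ((Complex.continuous_re.tendsto _).comp hlim) ?_
    filter_upwards [Ioo_mem_nhdsGT hε₀] with ε hε
    rw [Function.comp_apply, smoothInt_eq k u ε hε.1, Complex.ofReal_re]
    exact hlow ε hε.1 hε.2
  have him : (singInt k u).im = 0 := by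
    refine tendsto_nhds_unique ((Complex.continuous_im.tendsto _).comp hlim) ?_
    refine tendsto_const_nhds.congr' ?_
    filter_upwards [self_mem_nhdsWithin] with ε hε
    rw [Function.comp_apply, smoothInt_eq k u ε hε, Complex.ofReal_im]
  exact ⟨(singInt k u).re, hc.trans_le hre, Complex.ext (by simp) (by simpa using him)⟩
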